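/- arXiv:1509.01777 — 3 statements merged into one kernel-verified Lean document; each statement's English description precedes it below -/
import Mathlib

section
/- Let D ⊆ ℝ^d be an open set with nonempty boundary ∂D and signed distance φ. Let U₀ ⊆ ℝ^d be an open set containing ∂D, and let y : U₀ → ∂D be a continuous map satisfying ‖x − y(x)‖ = dist(x, ∂D) for all x ∈ U₀. Let g : ℝ^d → ℝ^d be continuous, let K ⊆ U₀ be compact, and let (f_n)_{n≥1} be a sequence of functions f_n : U₀ → ℝ^d such that: (i) f_n → 0 uniformly on every compact subset of D, and (ii) for every ε > 0, lim_{δ→0} limsup_{n→∞} sup{ ‖ f_n(x)/‖f_n(x)‖ − g(y(x)) ‖ : x ∈ K, |φ(x)| < δ, ‖f_n(x)‖ ≥ ε } = 0. Then for every ε > 0, lim_{δ→0} limsup_{n→∞} sup{ ‖ f_n(z)/‖f_n(z)‖ − g(z̃) ‖ : z ∈ K, φ(z) > −δ, z̃ ∈ ℝ^d, ‖z − z̃‖ < δ, ‖f_n(z)‖ ≥ ε } = 0. -/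
open Filter Metric Set

/-!
Fix `ε > 0`. Away from the boundary, on `{δ₀ ≤ φ}`, the `fₙ` converge uniformly to `0`, so for large
`n` every `z ∈ K` with `-δ₀ < φ z` and `ε ≤ ‖fₙ z‖` lies within `δ₀` of the boundary. There the
direction of `fₙ z` is close to `g (y z)`. Both `y z` and `z̃` are within `δ₀` of `z`, which ranges
over the compact set `K`, so `g (y z)` and `g z̃` are uniformly close to `g z`.
-/

open scoped Topology

section LimsupSSup

variable {α ι : Type*} {p : Filter α} {l : Filter ι} {S : α → ι → Set ℝ}

theorem eventually_forall_mem_lt_of_tendsto_limsup_sSup {c η : ℝ}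
    (hbdd : ∀ᶠ a in p, ∃ M, ∀ i, ∀ r ∈ S a i, r ≤ M)
    (hlim : Tendsto (fun a ↦ limsup (fun i ↦ sSup (S a i)) l) p (𝓝 c)) (hη : c < η) :
    ∀ᶠ a in p, ∀ᶠ i in l, ∀ r ∈ S a i, r < η := by
  filter_upwards [hbdd, hlim.eventually_lt_const hη] with a ⟨M, hM⟩ ha
  have hsSup_le (i : ι) : sSup (S a i) ≤ max M 0 :=
    Real.sSup_le (fun r hr ↦ (hM i r hr).trans (le_max_left _ _)) (le_max_right _ _)
  filter_upwards [eventually_lt_of_limsup_lt ha (isBoundedUnder_of ⟨_, hsSup_le⟩)] with i hi r hr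
  exact (le_csSup ⟨M, hM i⟩ hr).trans_lt hi

theorem tendsto_limsup_sSup_zero_of_eventually_le [l.NeBot]
    (hnonneg : ∀ a i, ∀ r ∈ S a i, 0 ≤ r)
    (hle : ∀ η > 0, ∀ᶠ a in p, ∀ᶠ i in l, ∀ r ∈ S a i, r ≤ η) :
    Tendsto (fun a ↦ limsup (fun i ↦ sSup (S a i)) l) p (𝓝 0) := by
  have hsSup_nonneg (a : α) (i : ι) : 0 ≤ sSup (S a i) := Real.sSup_nonneg (hnonneg a i)
  have hsSup_le (η : ℝ) (hη : 0 < η) : ∀ᶠ a in p, ∀ᶠ i in l, sSup (S a i) ≤ η :=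
    (hle η hη).mono fun a ha ↦ ha.mono fun i hi ↦ Real.sSup_le hi hη.le
  refine tendsto_order.2 ⟨fun b hb ↦ ?_, fun b hb ↦ ?_⟩
  · filter_upwards [hsSup_le 1 one_pos] with a ha
    exact hb.trans_le <| le_limsup_of_frequently_le (Frequently.of_forall (hsSup_nonneg a))
      (isBoundedUnder_of_eventually_le ha)
  · filter_upwards [hsSup_le (b / 2) (half_pos hb)] with a ha
    exact (limsup_le_of_le (isCoboundedUnder_le_of_le l (hsSup_nonneg a)) ha).trans_lt
      (half_lt_self hb)

end LimsupSSup

section SignedDist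

variable {X : Type*} [PseudoMetricSpace X] {D : Set X} {φ : X → ℝ} {x : X}

/-- `φ` is the signed distance to the boundary of `D`, positive inside `D` and negative outside its
closure. As `infDist x ∅ = 0`, it is the zero function when `D` has empty boundary. -/
structure IsSignedDist (D : Set X) (φ : X → ℝ) : Prop where
  eq_infDist_of_mem : ∀ x ∈ D, φ x = infDist x (frontier D)
  eq_zero_of_mem_frontier : ∀ x ∈ frontier D, φ x = 0
  eq_neg_infDist_of_notMem_closure : ∀ x ∉ closure D, φ x = -infDist x (frontier D)

namespace IsSignedDist

theorem eq_neg_infDist_of_notMem (hφ : IsSignedDist D φ) (hx : x ∉ D) :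
    φ x = -infDist x (frontier D) := by
  by_cases hx' : x ∈ closure D
  · have hfr : x ∈ frontier D := ⟨hx', fun h ↦ hx (interior_subset h)⟩
    rw [hφ.eq_zero_of_mem_frontier x hfr, infDist_zero_of_mem hfr, neg_zero]
  · exact hφ.eq_neg_infDist_of_notMem_closure x hx'

theorem abs_eq_infDist (hφ : IsSignedDist D φ) (x : X) : |φ x| = infDist x (frontier D) := by
  by_cases hx : x ∈ D
  · rw [hφ.eq_infDist_of_mem x hx, abs_of_nonneg infDist_nonneg]
  · rw [hφ.eq_neg_infDist_of_notMem hx, abs_neg, abs_of_nonneg infDist_nonneg]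

theorem mem_of_pos (hφ : IsSignedDist D φ) (hx : 0 < φ x) : x ∈ D := by
  by_contra hxD
  rw [hφ.eq_neg_infDist_of_notMem hxD, neg_pos] at hx
  exact hx.not_ge infDist_nonneg

theorem continuous (hφ : IsSignedDist D φ) : Continuous φ := by
  classical
  have hφ_eq : φ = fun x ↦ if x ∈ D then infDist x (frontier D) else -infDist x (frontier D) := by
    ext x
    split_ifs with hx
    exacts [hφ.eq_infDist_of_mem x hx, hφ.eq_neg_infDist_of_notMem hx]
  rw [hφ_eq]
  refine Continuous.if (fun x hx ↦ ?_) (continuous_infDist_pt _) (continuous_infDist_pt _).neg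
  rw [infDist_zero_of_mem (s := frontier D) hx, neg_zero]

end IsSignedDist

end SignedDist

section Directions

variable {X ι : Type*} [PseudoMetricSpace X] {l : Filter ι} {K : Set X} {φ : X → ℝ} {y : X → X}

theorem eventually_forall_dist_lt_of_isCompact {E : Type*} [PseudoMetricSpace E] {g : X → E}
    (hK : IsCompact K) (hg : ∀ x ∈ K, ContinuousAt g x) {η : ℝ} (hη : 0 < η) :
    ∀ᶠ δ in 𝓝[>] 0, ∀ x ∈ K, ∀ z, dist x z < δ → dist (g x) (g z) < η := by
  obtain ⟨ρ, hρ, hgρ⟩ :=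
    mem_uniformity_dist.1 (hK.uniformContinuousAt_of_continuousAt g hg (dist_mem_uniformity hη))
  filter_upwards [Ioo_mem_nhdsGT hρ] with δ hδ x hx z hxz
  exact hgρ (hxz.trans hδ.2) hx

theorem eventually_forall_dist_lt_of_dist_le_abs {E : Type*} [PseudoMetricSpace E] {g : X → E}
    {u : ι → X → E} {A : ι → Set X} (hK : IsCompact K) (hg : ∀ x ∈ K, ContinuousAt g x)
    (hy : ∀ x ∈ K, dist x (y x) ≤ |φ x|)
    (hA : ∀ δ > 0, ∀ᶠ n in l, ∀ x ∈ K, x ∈ A n → φ x < δ)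
    (hu : ∀ η > 0, ∀ᶠ δ in 𝓝[>] 0, ∀ᶠ n in l, ∀ x ∈ K, |φ x| < δ → x ∈ A n →
      dist (u n x) (g (y x)) < η) {η : ℝ} (hη : 0 < η) :
    ∀ᶠ δ in 𝓝[>] 0, ∀ᶠ n in l, ∀ x ∈ K, -δ < φ x → x ∈ A n → ∀ z, dist x z < δ →
      dist (u n x) (g z) < η := by
  have hη3 : 0 < η / 3 := by positivity
  obtain ⟨δ₀, ⟨hu₀, hg₀⟩, hδ₀⟩ := ((hu _ hη3).and
    (eventually_forall_dist_lt_of_isCompact hK hg hη3)).and self_mem_nhdsWithin |>.exists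
  filter_upwards [Ioo_mem_nhdsGT hδ₀] with δ ⟨_, hδ⟩
  filter_upwards [hu₀, hA δ₀ hδ₀] with n hun hAn x hx hφx hxA z hxz
  have hφx₀ : |φ x| < δ₀ := abs_lt.2 ⟨(neg_lt_neg hδ).trans hφx, hAn x hx hxA⟩
  calc
    dist (u n x) (g z) ≤ dist (u n x) (g (y x)) + dist (g (y x)) (g x) + dist (g x) (g z) :=
      dist_triangle4 _ _ _ _
    _ < η / 3 + η / 3 + η / 3 := by
      gcongr
      · exact hun x hx hφx₀ hxA
      · exact dist_comm (g x) _ ▸ hg₀ x hx _ ((hy x hx).trans_lt hφx₀)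
      · exact hg₀ x hx z (hxz.trans hδ)
    _ = η := add_thirds η

variable {E : Type*} [SeminormedAddCommGroup E] {g : X → E}

theorem eventually_exists_forall_norm_le_of_dist_le_abs (hK : IsCompact K)
    (hg : ∀ x ∈ K, ContinuousAt g x) (hy : ∀ x ∈ K, dist x (y x) ≤ |φ x|) :
    ∀ᶠ δ in 𝓝[>] 0, ∃ M, ∀ x ∈ K, |φ x| < δ → ‖g (y x)‖ ≤ M := by
  obtain ⟨M, hM⟩ := hK.exists_bound_of_continuousOn fun x hx ↦ (hg x hx).continuousWithinAt
  filter_upwards [eventually_forall_dist_lt_of_isCompact hK hg one_pos] with δ hδ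
  refine ⟨M + 1, fun x hx hφx ↦ ?_⟩
  have hclose : ‖g (y x) - g x‖ < 1 := by
    rw [← dist_eq_norm, dist_comm]
    exact hδ x hx _ ((hy x hx).trans_lt hφx)
  linarith [norm_le_norm_add_norm_sub' (g (y x)) (g x), hM x hx]

theorem stmt_2_general [NormedSpace ℝ E] [l.NeBot] (hK : IsCompact K)
    (hy : ∀ x ∈ K, dist x (y x) ≤ |φ x|) (hg : ∀ x ∈ K, ContinuousAt g x) {f : ι → X → E}
    (hf : ∀ δ > 0, TendstoUniformlyOn f 0 l (K ∩ {x | δ ≤ φ x})) {ε : ℝ} (hε : 0 < ε)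
    (hdir : Tendsto (fun δ : ℝ ↦ limsup (fun n ↦ sSup {r : ℝ | ∃ x ∈ K, |φ x| < δ ∧ ε ≤ ‖f n x‖ ∧
      r = ‖(‖f n x‖)⁻¹ • f n x - g (y x)‖}) l) (𝓝[>] 0) (𝓝 0)) :
    Tendsto (fun δ : ℝ ↦ limsup (fun n ↦ sSup {r : ℝ | ∃ z ∈ K, -δ < φ z ∧ ε ≤ ‖f n z‖ ∧
      ∃ zt, dist z zt < δ ∧ r = ‖(‖f n z‖)⁻¹ • f n z - g zt‖}) l) (𝓝[>] 0) (𝓝 0) := by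
  have hφ_lt (δ : ℝ) (hδ : 0 < δ) : ∀ᶠ n in l, ∀ x ∈ K, ε ≤ ‖f n x‖ → φ x < δ := by
    filter_upwards [tendstoUniformlyOn_iff.1 (hf δ hδ) ε hε] with n hn x hx hfx
    contrapose! hfx
    simpa only [Pi.zero_apply, dist_zero_left] using hn x ⟨hx, hfx⟩
  -- This makes the `sSup` in `hdir` a genuine supremum, not the junk value `0` of an unbounded set.
  have hbdd : ∀ᶠ δ in 𝓝[>] (0 : ℝ), ∃ M, ∀ n, ∀ r ∈ {r : ℝ | ∃ x ∈ K, |φ x| < δ ∧ ε ≤ ‖f n x‖ ∧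
      r = ‖(‖f n x‖)⁻¹ • f n x - g (y x)‖}, r ≤ M := by
    filter_upwards [eventually_exists_forall_norm_le_of_dist_le_abs hK hg hy] with δ ⟨M, hM⟩
    refine ⟨1 + M, ?_⟩
    rintro n _ ⟨x, hx, hφx, -, rfl⟩
    exact norm_sub_le_of_le (mem_closedBall_zero_iff.1 (inv_norm_smul_mem_unitClosedBall _))
      (hM x hx hφx)
  have hnear (η : ℝ) (hη : 0 < η) : ∀ᶠ δ in 𝓝[>] 0, ∀ᶠ n in l, ∀ x ∈ K, |φ x| < δ →
      x ∈ {x | ε ≤ ‖f n x‖} → dist ((‖f n x‖)⁻¹ • f n x) (g (y x)) < η := by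
    filter_upwards [eventually_forall_mem_lt_of_tendsto_limsup_sSup hbdd hdir hη] with δ hδ
    filter_upwards [hδ] with n hn x hx hφx hfx
    exact dist_eq_norm (_ : E) _ ▸ hn _ ⟨x, hx, hφx, hfx, rfl⟩
  refine tendsto_limsup_sSup_zero_of_eventually_le ?_ fun η hη ↦ ?_
  · rintro δ n _ ⟨z, -, -, -, zt, -, rfl⟩
    exact norm_nonneg _
  · filter_upwards [eventually_forall_dist_lt_of_dist_le_abs hK hg hy hφ_lt hnear hη] with δ hδ
    filter_upwards [hδ] with n hn
    rintro _ ⟨z, hz, hφz, hfz, zt, hzt, rfl⟩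
    exact dist_eq_norm (_ : E) _ ▸ (hn z hz hφz hfz zt hzt).le

end Directions

/-- Let `D ⊆ ℝ^d` be open with nonempty boundary and signed distance `φ`.
Let `U₀` be open with `∂D ⊆ U₀`, `y : U₀ → ∂D` continuous with `‖x − y(x)‖ = dist(x, ∂D)`
on `U₀`. Let `g : ℝ^d → ℝ^d` be continuous, `K ⊆ U₀` compact, and `(fₙ)` a sequence of
functions `U₀ → ℝ^d` such that (i) `fₙ → 0` uniformly on compact subsets of `D`, and
(ii) for every `ε > 0`,
`lim_{δ→0} limsup_n sup{‖fₙ(x)/‖fₙ(x)‖ − g(y(x))‖ : x ∈ K, |φ(x)| < δ, ‖fₙ(x)‖ ≥ ε} = 0`.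
Then for every `ε > 0`,
`lim_{δ→0} limsup_n sup{‖fₙ(z)/‖fₙ(z)‖ − g(z̃)‖ : z ∈ K, φ(z) > −δ, ‖z − z̃‖ < δ, ‖fₙ(z)‖ ≥ ε} = 0`.
(Suprema over empty sets are interpreted as `0`, which is the convention of `sSup` on `ℝ`.) -/
theorem stmt_2 {d : ℕ} (D U₀ K : Set (EuclideanSpace ℝ (Fin d)))
    (hD : IsOpen D) (hbd : (frontier D).Nonempty)
    (hU₀ : IsOpen U₀) (hDU : frontier D ⊆ U₀)
    (φ : EuclideanSpace ℝ (Fin d) → ℝ)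
    (hφ_in : ∀ x ∈ D, φ x = infDist x (frontier D))
    (hφ_bd : ∀ x ∈ frontier D, φ x = 0)
    (hφ_out : ∀ x ∉ closure D, φ x = -infDist x (frontier D))
    (y : EuclideanSpace ℝ (Fin d) → EuclideanSpace ℝ (Fin d))
    (hy_cont : ContinuousOn y U₀)
    (hy_mem : ∀ x ∈ U₀, y x ∈ frontier D)
    (hy_dist : ∀ x ∈ U₀, ‖x - y x‖ = infDist x (frontier D))
    (g : EuclideanSpace ℝ (Fin d) → EuclideanSpace ℝ (Fin d))
    (hg : Continuous g)
    (hK : IsCompact K) (hKU : K ⊆ U₀)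
    (f : ℕ → EuclideanSpace ℝ (Fin d) → EuclideanSpace ℝ (Fin d))
    (hf0 : ∀ C : Set (EuclideanSpace ℝ (Fin d)), IsCompact C → C ⊆ D →
      TendstoUniformlyOn (fun n => f n) 0 atTop C)
    (hdir : ∀ ε : ℝ, 0 < ε →
      Tendsto (fun δ : ℝ =>
          limsup (fun n : ℕ => sSup {r : ℝ | ∃ x ∈ K, |φ x| < δ ∧ ε ≤ ‖f n x‖ ∧
            r = ‖(‖f n x‖)⁻¹ • f n x - g (y x)‖}) atTop)
        (nhdsWithin 0 (Ioi 0)) (nhds 0)) :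
    ∀ ε : ℝ, 0 < ε →
      Tendsto (fun δ : ℝ =>
          limsup (fun n : ℕ => sSup {r : ℝ | ∃ z ∈ K, -δ < φ z ∧ ε ≤ ‖f n z‖ ∧
            ∃ zt : EuclideanSpace ℝ (Fin d), ‖z - zt‖ < δ ∧
              r = ‖(‖f n z‖)⁻¹ • f n z - g zt‖}) atTop)
        (nhdsWithin 0 (Ioi 0)) (nhds 0) := by
  have hφ : IsSignedDist D φ := ⟨hφ_in, hφ_bd, hφ_out⟩
  have hy (x) (hx : x ∈ K) : dist x (y x) ≤ |φ x| := by
    rw [dist_eq_norm, hy_dist x (hKU hx), hφ.abs_eq_infDist]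
  have hf (δ : ℝ) (hδ : 0 < δ) : TendstoUniformlyOn f 0 atTop (K ∩ {x | δ ≤ φ x}) :=
    hf0 _ (hK.inter_right (isClosed_le continuous_const hφ.continuous))
      fun x hx ↦ hφ.mem_of_pos (hδ.trans_le hx.2)
  intro ε hε
  simpa only [dist_eq_norm] using
    stmt_2_general hK hy (fun x _ ↦ hg.continuousAt) hf hε (hdir ε hε)
end

section
/- Fix ε₀ > 0, y₀ ∈ (0, ε₀), and constants C ≥ 0, C₆ ≥ 0. Let (ψ_n)_{n≥1} be a sequence of Lebesgue-integrable functions ψ_n : [−ε₀, ε₀] → ℝ and (b_n)_{n≥1} a sequence with b_n ∈ (0, ε₀) and b_n → 0, such that: (i) ψ_n(s) ≥ −C for all s ∈ [−ε₀, ε₀] and all n; (ii) sup_{y ∈ [b_n, ε₀]} ψ_n(y) ≤ C₆ for all n; (iii) for every ε ∈ (0, ε₀), ∫_{−ε}^{ε} ψ_n(z) dz → ∞ as n → ∞. Define S_n(x) := ∫_{y₀}^{x} exp( −2 ∫_{b_n}^{y} ψ_n(z) dz ) dy for x ∈ [−ε₀, ε₀]. Then: limsup_{n→∞} S_n(x)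 < ∞ for every x ∈ (0, ε₀], and lim_{n→∞} S_n(x) = −∞ for every x ∈ [−ε₀, 0). -/
open Filter Set intervalIntegral

/-!
Moving the base point of the inner integral from `b` to `e` multiplies the scale function by the
constant `exp (2 ∫_e^b ψ)`, so the dependence on `bₙ` sits in a single factor. What remains is the
scale function with a fixed base point, which is compared, using `ψ ≥ -C`, with that of the
constant drift `-C`: it is bounded above, and to the left of the base point it is bounded away
from `0` below `0`. With base point `y₀` the factor stays bounded. With base point `-ε`, where
`x < -ε < 0`, the factor tends to `∞`, because `∫_{-ε}^{ε} ψₙ` does and `∫_{bₙ}^{ε} ψₙ` is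
bounded above.
-/

section ScaleFunction

open MeasureTheory

/-- The scale density `exp (-2 ∫_b^y ψ)`, normalised at `b`, of the one-dimensional diffusion
with generator `½ f'' + ψ f'`. -/
noncomputable def scaleDensity (ψ : ℝ → ℝ) (b y : ℝ) : ℝ :=
  Real.exp (-2 * ∫ z in b..y, ψ z)

/-- The scale function vanishing at `y₀` whose derivative is the scale density normalised at `b`;
the two base points are independent of each other. -/
noncomputable def scaleFunction (ψ : ℝ → ℝ) (b y₀ x : ℝ) : ℝ :=
  ∫ y in y₀..x, scaleDensity ψ b y

variable {φ ψ : ℝ → ℝ} {p q b e x y y₀ : ℝ}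

lemma intervalIntegrable_of_integrableOn_Icc (hψ : IntegrableOn ψ (Icc p q))
    (hx : x ∈ Icc p q) (hy : y ∈ Icc p q) : IntervalIntegrable ψ volume x y :=
  (hψ.mono_set (uIcc_subset_Icc hx hy)).intervalIntegrable

lemma scaleDensity_pos (ψ : ℝ → ℝ) (b y : ℝ) : 0 < scaleDensity ψ b y :=
  Real.exp_pos _

lemma scaleDensity_inv (ψ : ℝ → ℝ) (b y : ℝ) : (scaleDensity ψ b y)⁻¹ = scaleDensity ψ y b := by
  rw [scaleDensity, scaleDensity, integral_symm, ← Real.exp_neg, mul_neg, neg_neg]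

lemma scaleDensity_mul_scaleDensity (hbe : IntervalIntegrable ψ volume b e)
    (hey : IntervalIntegrable ψ volume e y) :
    scaleDensity ψ b e * scaleDensity ψ e y = scaleDensity ψ b y := by
  rw [scaleDensity, scaleDensity, scaleDensity, ← Real.exp_add, ← mul_add,
    integral_add_adjacent_intervals hbe hey]

lemma scaleDensity_le_scaleDensity (hby : b ≤ y) (hφ : IntervalIntegrable φ volume b y)
    (hψ : IntervalIntegrable ψ volume b y) (hle : ∀ z ∈ Icc b y, φ z ≤ ψ z) :
    scaleDensity ψ b y ≤ scaleDensity φ b y := by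
  have := integral_mono_on hby hφ hψ hle
  exact Real.exp_le_exp.2 (by linarith)

lemma scaleDensity_le_scaleDensity_of_ge (hyb : y ≤ b) (hφ : IntervalIntegrable φ volume y b)
    (hψ : IntervalIntegrable ψ volume y b) (hle : ∀ z ∈ Icc y b, φ z ≤ ψ z) :
    scaleDensity φ b y ≤ scaleDensity ψ b y := by
  rw [← scaleDensity_inv φ, ← scaleDensity_inv ψ]
  exact inv_anti₀ (scaleDensity_pos ψ y b) (scaleDensity_le_scaleDensity hyb hφ hψ hle)

lemma continuousOn_scaleDensity (hψ : IntegrableOn ψ (Icc p q)) (hb : b ∈ Icc p q) :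
    ContinuousOn (scaleDensity ψ b) (Icc p q) := by
  have hpq : p ≤ q := hb.1.trans hb.2
  rw [← uIcc_of_le hpq] at hb hψ ⊢
  exact ((continuousOn_primitive_interval' hψ.intervalIntegrable hb).const_mul (-2)).rexp

lemma intervalIntegrable_scaleDensity (hψ : IntegrableOn ψ (Icc p q)) (hb : b ∈ Icc p q)
    (hx : x ∈ Icc p q) (hy : y ∈ Icc p q) : IntervalIntegrable (scaleDensity ψ b) volume x y :=
  ((continuousOn_scaleDensity hψ hb).mono (uIcc_subset_Icc hx hy)).intervalIntegrable

lemma scaleFunction_eq_scaleDensity_mul (hψ : IntegrableOn ψ (Icc p q)) (hb : b ∈ Icc p q)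
    (he : e ∈ Icc p q) (hy₀ : y₀ ∈ Icc p q) (hx : x ∈ Icc p q) :
    scaleFunction ψ b y₀ x = scaleDensity ψ b e * scaleFunction ψ e y₀ x := by
  rw [scaleFunction, scaleFunction, ← intervalIntegral.integral_const_mul]
  refine integral_congr fun y hy ↦ ?_
  have hy : y ∈ Icc p q := uIcc_subset_Icc hy₀ hx hy
  exact (scaleDensity_mul_scaleDensity (intervalIntegrable_of_integrableOn_Icc hψ hb he)
    (intervalIntegrable_of_integrableOn_Icc hψ he hy)).symm

lemma scaleFunction_nonneg (ψ : ℝ → ℝ) (b : ℝ) (h : y₀ ≤ x) : 0 ≤ scaleFunction ψ b y₀ x :=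
  integral_nonneg h fun y _ ↦ (scaleDensity_pos ψ b y).le

lemma scaleFunction_neg (hψ : IntegrableOn ψ (Icc p q)) (hb : b ∈ Icc p q)
    (hy₀ : y₀ ∈ Icc p q) (hx : x ∈ Icc p q) (h : x < y₀) : scaleFunction ψ b y₀ x < 0 := by
  rw [scaleFunction, integral_symm, neg_lt_zero]
  exact intervalIntegral_pos_of_pos (intervalIntegrable_scaleDensity hψ hb hx hy₀)
    (scaleDensity_pos ψ b) h

lemma scaleFunction_le_scaleFunction_of_le (hψ : IntegrableOn ψ (Icc p q)) (hb : b ∈ Icc p q)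
    (he : e ∈ Icc p q) (hy₀ : y₀ ∈ Icc p q) (hx : x ∈ Icc p q) (h : e ≤ y₀) :
    scaleFunction ψ b y₀ x ≤ scaleFunction ψ b e x := by
  have hadd : scaleFunction ψ b e y₀ + scaleFunction ψ b y₀ x = scaleFunction ψ b e x :=
    integral_add_adjacent_intervals (intervalIntegrable_scaleDensity hψ hb he hy₀)
      (intervalIntegrable_scaleDensity hψ hb hy₀ hx)
  linarith [scaleFunction_nonneg ψ b h]

-- To the left of `e` both the density comparison and the orientation of the integral are reversed.
lemma scaleFunction_self_le_scaleFunction_self (hφ : IntegrableOn φ (Icc p q))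
    (hψ : IntegrableOn ψ (Icc p q)) (he : e ∈ Icc p q) (hx : x ∈ Icc p q)
    (hle : ∀ z ∈ Icc p q, φ z ≤ ψ z) :
    scaleFunction ψ e e x ≤ scaleFunction φ e e x := by
  rcases le_total e x with hex | hxe
  · refine integral_mono_on hex (intervalIntegrable_scaleDensity hψ he he hx)
      (intervalIntegrable_scaleDensity hφ he he hx) fun y hy ↦ ?_
    have hyI : y ∈ Icc p q := ⟨he.1.trans hy.1, hy.2.trans hx.2⟩
    exact scaleDensity_le_scaleDensity hy.1 (intervalIntegrable_of_integrableOn_Icc hφ he hyI)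
      (intervalIntegrable_of_integrableOn_Icc hψ he hyI)
      fun z hz ↦ hle z ⟨he.1.trans hz.1, hz.2.trans hyI.2⟩
  · rw [scaleFunction, scaleFunction, integral_symm x e, integral_symm x e, neg_le_neg_iff]
    refine integral_mono_on hxe (intervalIntegrable_scaleDensity hφ he hx he)
      (intervalIntegrable_scaleDensity hψ he hx he) fun y hy ↦ ?_
    have hyI : y ∈ Icc p q := ⟨hx.1.trans hy.1, hy.2.trans he.2⟩
    exact scaleDensity_le_scaleDensity_of_ge hy.2
      (intervalIntegrable_of_integrableOn_Icc hφ hyI he)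
      (intervalIntegrable_of_integrableOn_Icc hψ hyI he)
      fun z hz ↦ hle z ⟨hyI.1.trans hz.1, hz.2.trans he.2⟩

end ScaleFunction

section Families

open MeasureTheory Topology

variable {ι : Type*} {l : Filter ι} {ψ : ι → ℝ → ℝ} {b : ι → ℝ} {p q c K β d e x y₀ : ℝ}

lemma limsup_coe_lt_top_of_isBoundedUnder {u : ι → ℝ} (hu : l.IsBoundedUnder (· ≤ ·) u) :
    limsup (fun i ↦ (u i : EReal)) l < ⊤ := by
  obtain ⟨M, hM⟩ := hu
  refine (limsup_le_of_le (by isBoundedDefault) ?_).trans_lt (EReal.coe_lt_top M)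
  exact (eventually_map.1 hM).mono fun i hi ↦ EReal.coe_le_coe_iff.2 hi

theorem isBoundedUnder_le_scaleFunction (hψ : ∀ i, IntegrableOn (ψ i) (Icc p q))
    (hlow : ∀ i, ∀ z ∈ Icc p q, c ≤ ψ i z) (hb : Tendsto b l (𝓝 β)) (hpβ : p < β)
    (hβ : β < y₀) (hy₀ : y₀ ≤ q) (hx : x ∈ Icc p q) :
    l.IsBoundedUnder (· ≤ ·) fun i ↦ scaleFunction (ψ i) (b i) y₀ x := by
  have hy₀I : y₀ ∈ Icc p q := ⟨(hpβ.trans hβ).le, hy₀⟩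
  have hc : IntegrableOn (fun _ ↦ c) (Icc p q) := continuousOn_const.integrableOn_Icc
  set F := scaleFunction (fun _ ↦ c) y₀ y₀ x
  have hlim : Tendsto (fun i ↦ scaleDensity (fun _ ↦ c) (b i) y₀ * |F|) l
      (𝓝 (scaleDensity (fun _ ↦ c) β y₀ * |F|)) := by
    simp only [scaleDensity, intervalIntegral.integral_const]
    exact ((((hb.const_sub y₀).smul_const c).const_mul (-2)).rexp).mul_const |F|
  refine hlim.isBoundedUnder_le.mono_le ?_
  filter_upwards [hb.eventually_mem (Icc_mem_nhds hpβ (hβ.trans_le hy₀)),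
    hb.eventually_le_const hβ] with i hbI hby₀
  calc scaleFunction (ψ i) (b i) y₀ x
      = scaleDensity (ψ i) (b i) y₀ * scaleFunction (ψ i) y₀ y₀ x :=
        scaleFunction_eq_scaleDensity_mul (hψ i) hbI hy₀I hy₀I hx
    _ ≤ scaleDensity (ψ i) (b i) y₀ * |F| :=
        mul_le_mul_of_nonneg_left ((scaleFunction_self_le_scaleFunction_self hc (hψ i) hy₀I hx
          (hlow i)).trans (le_abs_self F)) (scaleDensity_pos _ _ _).le
    _ ≤ scaleDensity (fun _ ↦ c) (b i) y₀ * |F| :=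
        mul_le_mul_of_nonneg_right (scaleDensity_le_scaleDensity hby₀ intervalIntegrable_const
          (intervalIntegrable_of_integrableOn_Icc (hψ i) hbI hy₀I)
          fun z hz ↦ hlow i z ⟨hbI.1.trans hz.1, hz.2.trans hy₀⟩) (abs_nonneg F)

lemma tendsto_scaleDensity_atTop (h : Tendsto (fun i ↦ ∫ z in e..b i, ψ i z) l atTop) :
    Tendsto (fun i ↦ scaleDensity (ψ i) (b i) e) l atTop := by
  have hsymm (i : ι) : scaleDensity (ψ i) (b i) e = Real.exp (2 * ∫ z in e..b i, ψ i z) := by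
    rw [scaleDensity, integral_symm, mul_neg, neg_mul, neg_neg]
  simp only [hsymm]
  exact Real.tendsto_exp_atTop.comp (h.const_mul_atTop two_pos)

theorem tendsto_scaleFunction_atBot (hψ : ∀ i, IntegrableOn (ψ i) (Icc p q))
    (hlow : ∀ i, ∀ z ∈ Icc p q, c ≤ ψ i z) (hb : ∀ᶠ i in l, b i ∈ Icc p q)
    (hint : Tendsto (fun i ↦ ∫ z in e..b i, ψ i z) l atTop)
    (hx : p ≤ x) (hxe : x < e) (hey₀ : e ≤ y₀) (hy₀ : y₀ ≤ q) :
    Tendsto (fun i ↦ scaleFunction (ψ i) (b i) y₀ x) l atBot := by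
  have heI : e ∈ Icc p q := ⟨hx.trans hxe.le, hey₀.trans hy₀⟩
  have hxI : x ∈ Icc p q := ⟨hx, hxe.le.trans heI.2⟩
  have hy₀I : y₀ ∈ Icc p q := ⟨heI.1.trans hey₀, hy₀⟩
  have hc : IntegrableOn (fun _ ↦ c) (Icc p q) := continuousOn_const.integrableOn_Icc
  have hneg : scaleFunction (fun _ ↦ c) e e x < 0 := scaleFunction_neg hc heI heI hxI hxe
  refine tendsto_atBot_mono' l ?_
    ((tendsto_scaleDensity_atTop hint).atTop_mul_const_of_neg hneg)
  filter_upwards [hb] with i hbI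
  rw [scaleFunction_eq_scaleDensity_mul (hψ i) hbI heI hy₀I hxI]
  refine mul_le_mul_of_nonneg_left ?_ (scaleDensity_pos _ _ _).le
  exact (scaleFunction_le_scaleFunction_of_le (hψ i) heI heI hy₀I hxI hey₀).trans
    (scaleFunction_self_le_scaleFunction_self hc (hψ i) heI hxI (hlow i))

lemma tendsto_integral_atTop_of_le_of_tendsto (hψ : ∀ i, IntegrableOn (ψ i) (Icc p q))
    (hb : Tendsto b l (𝓝 β)) (hpβ : p < β) (hβd : β < d) (hdq : d ≤ q) (he : e ∈ Icc p q)
    (hup : ∀ i, ∀ z ∈ Icc (b i) d, ψ i z ≤ K)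
    (hint : Tendsto (fun i ↦ ∫ z in e..d, ψ i z) l atTop) :
    Tendsto (fun i ↦ ∫ z in e..b i, ψ i z) l atTop := by
  have hdI : d ∈ Icc p q := ⟨(hpβ.trans hβd).le, hdq⟩
  have hlim : Tendsto (fun i ↦ -((d - b i) * K)) l (𝓝 (-((d - β) * K))) :=
    ((hb.const_sub d).mul_const K).neg
  refine tendsto_atTop_mono' l ?_ (hint.atTop_add hlim)
  filter_upwards [hb.eventually_mem (Icc_mem_nhds hpβ (hβd.trans_le hdq)),
    hb.eventually_le_const hβd] with i hbI hbd
  have hbdint := intervalIntegrable_of_integrableOn_Icc (hψ i) hbI hdI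
  have hsplit : (∫ z in e..b i, ψ i z) + ∫ z in b i..d, ψ i z = ∫ z in e..d, ψ i z :=
    integral_add_adjacent_intervals (intervalIntegrable_of_integrableOn_Icc (hψ i) he hbI) hbdint
  have hupper : ∫ z in b i..d, ψ i z ≤ (d - b i) * K := by
    simpa only [intervalIntegral.integral_const, smul_eq_mul] using
      integral_mono_on hbd hbdint intervalIntegrable_const (hup i)
  linarith

theorem stmt_5_general {ε₀ C C₆ : ℝ} (hy₀ : y₀ ∈ Ioo 0 ε₀)
    (hint : ∀ i, IntegrableOn (ψ i) (Icc (-ε₀) ε₀)) (hb0 : Tendsto b l (𝓝 0))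
    (hlow : ∀ i, ∀ s ∈ Icc (-ε₀) ε₀, -C ≤ ψ i s)
    (hup : ∀ i, ∀ y ∈ Icc (b i) ε₀, ψ i y ≤ C₆)
    (hspike : ∀ ε ∈ Ioo 0 ε₀, Tendsto (fun i ↦ ∫ z in (-ε)..ε, ψ i z) l atTop)
    {S : ι → ℝ → ℝ} (hS : ∀ i, ∀ x ∈ Icc (-ε₀) ε₀, S i x = scaleFunction (ψ i) (b i) y₀ x) :
    (∀ x ∈ Icc (-ε₀) ε₀, limsup (fun i ↦ (S i x : EReal)) l < ⊤) ∧
    (∀ x ∈ Ico (-ε₀) 0, Tendsto (fun i ↦ S i x) l atBot) := by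
  have hε₀ : 0 < ε₀ := hy₀.1.trans hy₀.2
  refine ⟨fun x hx ↦ ?_, fun x ⟨hx, hx0⟩ ↦ ?_⟩
  · simp only [hS _ x hx]
    exact limsup_coe_lt_top_of_isBoundedUnder (isBoundedUnder_le_scaleFunction hint hlow hb0
      (neg_lt_zero.2 hε₀) hy₀.1 hy₀.2.le hx)
  · simp only [hS _ x ⟨hx, hx0.le.trans hε₀.le⟩]
    obtain ⟨ε, hε, hεx⟩ : ∃ ε, 0 < ε ∧ ε < -x := exists_between (neg_pos.2 hx0)
    have hεε₀ : ε < ε₀ := by linarith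
    have hbase : Tendsto (fun i ↦ ∫ z in (-ε)..b i, ψ i z) l atTop :=
      tendsto_integral_atTop_of_le_of_tendsto hint hb0 (neg_lt_zero.2 hε₀) hε hεε₀.le
        ⟨by linarith, by linarith⟩ (fun i z hz ↦ hup i z ⟨hz.1, hz.2.trans hεε₀.le⟩)
        (hspike ε ⟨hε, hεε₀⟩)
    exact tendsto_scaleFunction_atBot hint hlow
      (hb0.eventually_mem (Icc_mem_nhds (neg_lt_zero.2 hε₀) hε₀)) hbase hx
      (by linarith) (by linarith [hy₀.1]) hy₀.2.le

end Families

/-- Scale-function estimates. With `ψₙ` integrable on `[−ε₀, ε₀]`,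
`ψₙ ≥ −C`, `ψₙ ≤ C₆` on `[bₙ, ε₀]` where `bₙ → 0`, `bₙ ∈ (0, ε₀)`, and
`∫_{−ε}^{ε} ψₙ → ∞` for every `ε ∈ (0, ε₀)`, the scale functions
`Sₙ(x) = ∫_{y₀}^{x} exp(−2∫_{bₙ}^{y} ψₙ(z) dz) dy` satisfy
`limsup_n Sₙ(x) < ∞` for `x ∈ (0, ε₀]` and `Sₙ(x) → −∞` for `x ∈ [−ε₀, 0)`. -/
theorem stmt_5 (ε₀ y₀ C C₆ : ℝ) (hε₀ : 0 < ε₀) (hy₀ : y₀ ∈ Ioo 0 ε₀)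
    (hC : 0 ≤ C) (hC₆ : 0 ≤ C₆)
    (ψ : ℕ → ℝ → ℝ)
    (hint : ∀ n, MeasureTheory.IntegrableOn (ψ n) (Icc (-ε₀) ε₀))
    (b : ℕ → ℝ) (hb : ∀ n, b n ∈ Ioo 0 ε₀) (hb0 : Tendsto b atTop (nhds 0))
    (hlow : ∀ n, ∀ s ∈ Icc (-ε₀) ε₀, -C ≤ ψ n s)
    (hup : ∀ n, ∀ y ∈ Icc (b n) ε₀, ψ n y ≤ C₆)
    (hspike : ∀ ε ∈ Ioo 0 ε₀, Tendsto (fun n : ℕ => ∫ z in (-ε)..ε, ψ n z) atTop atTop)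
    (S : ℕ → ℝ → ℝ)
    (hS : ∀ n, ∀ x ∈ Icc (-ε₀) ε₀,
      S n x = ∫ y in y₀..x, Real.exp (-2 * ∫ z in (b n)..y, ψ n z)) :
    (∀ x ∈ Ioc 0 ε₀, limsup (fun n : ℕ => ((S n x : ℝ) : EReal)) atTop < ⊤) ∧
    (∀ x ∈ Ico (-ε₀) 0, Tendsto (fun n : ℕ => S n x) atTop atBot) := by
  have h := stmt_5_general hy₀ hint hb0 hlow hup hspike hS
  exact ⟨fun x hx ↦ h.1 x ⟨by linarith [hx.1], hx.2⟩, h.2⟩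
end

section
/- Fix T > 0. Let (X_n)_{n≥1}, (X'_n)_{n≥1}, (X''_n)_{n≥1} be three sequences of random elements of C([0, T], ℝ) such that almost surely X_n(0) = X'_n(0) = X''_n(0) = 0 for every n, and almost surely for all 0 ≤ s ≤ t ≤ T and all n, X''_n(t) − X''_n(s) ≤ X_n(t) − X_n(s) ≤ X'_n(t) − X'_n(s). If the sequences (X'_n)_{n≥1} and (X''_n)_{n≥1} are tight, then the sequence (X_n)_{n≥1} is tight. -/
open Filter Set MeasureTheory

/-- A sequence `(Xₙ)` of random elements of a topological space `S` (all defined on a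
common probability space `(Ω, P)`) is tight if for every `ε > 0` there is a compact set
`K ⊆ S` such that `P(Xₙ ∈ K) ≥ 1 − ε` for all `n`. -/
def IsTightSeq {Ω S : Type*} [MeasurableSpace Ω] [TopologicalSpace S]
    (P : Measure Ω) (X : ℕ → Ω → S) : Prop :=
  ∀ ε : ℝ, 0 < ε → ∃ K : Set S, IsCompact K ∧
    ∀ n : ℕ, 1 - ENNReal.ofReal ε ≤ P {ω | X n ω ∈ K}

/-!
An almost sure pathwise bound between increments transfers tightness. A compact set of paths is
equicontinuous, and equicontinuity passes to all paths whose increments are dominated by those of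
its members; if moreover the values at one time stay in a compact set, the dominated paths are
pointwise bounded, hence relatively compact by Arzelà–Ascoli. The two-sided comparison of real
increments gives domination by the planar process `(X', X'')` in the supremum metric of `ℝ × ℝ`.
-/

section RelativelyCompactPaths

variable {α E F : Type*} [TopologicalSpace α]

lemma equicontinuous_coe_of_isCompact [UniformSpace F] [LocallyCompactPair α F] {K : Set C(α, F)}
    (hK : IsCompact K) : Equicontinuous ((↑) : K → α → F) := by
  intro x U hU
  have heval : Continuous fun p : α × C(α, F) ↦ p.2 p.1 := by fun_prop
  obtain ⟨V, hV, hVU⟩ := hK.mem_uniformity_of_prod (f := fun y (g : C(α, F)) ↦ g y)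
    heval.continuousOn (mem_univ x) (symm_le_uniformity hU)
  rw [nhdsWithin_univ] at hV
  filter_upwards [hV] with y hy g
  exact hVU y hy g g.2

lemma equicontinuous_of_forall_exists_dist_le {ι κ : Type*} [PseudoMetricSpace E]
    [PseudoMetricSpace F] {f : ι → α → E} {g : κ → α → F} (hg : Equicontinuous g)
    (hfg : ∀ i, ∃ j, ∀ x y, dist (f i x) (f i y) ≤ dist (g j x) (g j y)) : Equicontinuous f := by
  intro x
  rw [Metric.equicontinuousAt_iff_right]
  intro ε hε
  filter_upwards [Metric.equicontinuousAt_iff_right.1 (hg x) ε hε] with y hy i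
  obtain ⟨j, hj⟩ := hfg i
  exact (hj x y).trans_lt (hy j)

lemma isCompact_closure_of_equicontinuous [WeaklyLocallyCompactSpace α] [UniformSpace E] [T2Space E]
    {S : Set C(α, E)} (hS : Equicontinuous ((↑) : S → α → E))
    (hpt : ∀ x, ∃ Q, IsCompact Q ∧ ∀ f ∈ S, f x ∈ Q) : IsCompact (closure S) := by
  refine ArzelaAscoli.isCompact_closure_of_isClosedEmbedding (𝔖 := {K | IsCompact K})
    (F := fun f : C(α, E) ↦ ⇑f) (fun _ hK ↦ hK)
    ⟨ContinuousMap.isUniformEmbedding_toUniformOnFunIsCompact.isEmbedding, ?_⟩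
    (fun K _ ↦ hS.equicontinuousOn K) fun _ _ x _ ↦ hpt x
  change IsClosed (range ContinuousMap.toUniformOnFunIsCompact)
  rw [ContinuousMap.range_toUniformOnFunIsCompact]
  exact UniformOnFun.isClosed_setOfPred_continuous CompactlyCoherentSpace.isCoherentWith

lemma isCompact_closure_setOf_dist_le [WeaklyLocallyCompactSpace α] [MetricSpace E] [ProperSpace E]
    [PseudoMetricSpace F] (o : α) {C : Set E} (hC : IsCompact C) {K : Set C(α, F)}
    (hK : IsCompact K) :
    IsCompact (closure {f : C(α, E) |
      f o ∈ C ∧ ∃ g ∈ K, ∀ s t, dist (f s) (f t) ≤ dist (g s) (g t)}) := by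
  refine isCompact_closure_of_equicontinuous
    (equicontinuous_of_forall_exists_dist_le (equicontinuous_coe_of_isCompact hK) ?_) fun x ↦ ?_
  · rintro ⟨f, -, g, hg, hfg⟩
    exact ⟨⟨g, hg⟩, hfg⟩
  · have hcont : Continuous fun g : C(α, F) ↦ dist (g x) (g o) := by fun_prop
    obtain ⟨R, hR⟩ := (hK.image hcont).bddAbove
    refine ⟨Metric.cthickening R C, hC.cthickening, ?_⟩
    rintro f ⟨hfo, g, hg, hfg⟩
    exact Metric.mem_cthickening_of_dist_le _ _ _ _ hfo
      ((hfg x o).trans (hR (mem_image_of_mem _ hg)))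

end RelativelyCompactPaths

section Tightness

variable {Ω S S' : Type*} [MeasurableSpace Ω] {P : Measure Ω}

lemma one_sub_add_le_measure_inter [IsProbabilityMeasure P] {A B : Set Ω}
    (hA : NullMeasurableSet A P) {δ ε : ENNReal} (hδ : 1 - δ ≤ P A) (hε : 1 - ε ≤ P B) :
    1 - (δ + ε) ≤ P (A ∩ B) := by
  have hAc : P Aᶜ ≤ δ := by
    rw [prob_compl_eq_one_sub₀ hA]
    exact tsub_le_iff_tsub_le.1 hδ
  rw [tsub_le_iff_right]
  calc 1 ≤ P B + ε := tsub_le_iff_right.1 hε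
    _ ≤ P (B ∩ A) + P (B \ A) + ε := by gcongr; exact measure_le_inter_add_sdiff P B A
    _ ≤ P (A ∩ B) + δ + ε := by
      rw [inter_comm]
      gcongr
      exact (measure_mono fun _ hω ↦ hω.2).trans hAc
    _ = P (A ∩ B) + (δ + ε) := add_assoc _ _ _

variable [TopologicalSpace S] [TopologicalSpace S'] {X : ℕ → Ω → S} {Y : ℕ → Ω → S'}

lemma isTightSeq_of_ae_mem [IsProbabilityMeasure P] {K : Set S} (hK : IsCompact K)
    (hX : ∀ n, ∀ᵐ ω ∂P, X n ω ∈ K) : IsTightSeq P X := by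
  refine fun ε _ ↦ ⟨K, hK, fun n ↦ ?_⟩
  have hprob : P {ω | X n ω ∈ K} = 1 := by
    rw [measure_congr (eventuallyEq_univ.2 (hX n)), measure_univ]
  exact hprob ▸ tsub_le_self

namespace IsTightSeq

lemma of_ae_mem_imp (hY : IsTightSeq P Y)
    (hYX : ∀ K, IsCompact K → ∃ L, IsCompact L ∧ ∀ n, ∀ᵐ ω ∂P, Y n ω ∈ K → X n ω ∈ L) :
    IsTightSeq P X := by
  intro ε hε
  obtain ⟨K, hK, hPK⟩ := hY ε hε
  obtain ⟨L, hL, hKL⟩ := hYX K hK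
  exact ⟨L, hL, fun n ↦ (hPK n).trans (measure_mono_ae (hKL n))⟩

lemma map (hX : IsTightSeq P X) {φ : S → S'} (hφ : Continuous φ) :
    IsTightSeq P fun n ω ↦ φ (X n ω) :=
  hX.of_ae_mem_imp fun K hK ↦
    ⟨φ '' K, hK.image hφ, fun _ ↦ Eventually.of_forall fun _ ↦ mem_image_of_mem φ⟩

lemma prodMk [IsProbabilityMeasure P] [T2Space S] [MeasurableSpace S] [OpensMeasurableSpace S]
    (hX : IsTightSeq P X) (hX_meas : ∀ n, AEMeasurable (X n) P) (hY : IsTightSeq P Y) :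
    IsTightSeq P fun n ω ↦ (X n ω, Y n ω) := by
  intro ε hε
  obtain ⟨K, hK, hPK⟩ := hX (ε / 2) (half_pos hε)
  obtain ⟨L, hL, hPL⟩ := hY (ε / 2) (half_pos hε)
  refine ⟨K ×ˢ L, hK.prod hL, fun n ↦ ?_⟩
  rw [← add_halves ε, ENNReal.ofReal_add (half_pos hε).le (half_pos hε).le]
  exact one_sub_add_le_measure_inter
    ((hX_meas n).nullMeasurableSet_preimage hK.measurableSet) (hPK n) (hPL n)

variable {α E F : Type*} [TopologicalSpace α]

lemma continuousMap_prodMk [IsProbabilityMeasure P] [TopologicalSpace E] [T2Space E]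
    [LocallyCompactPair α E] [TopologicalSpace F] [LocallyCompactPair α F]
    [MeasurableSpace C(α, E)] [OpensMeasurableSpace C(α, E)]
    {X : ℕ → Ω → C(α, E)} {Y : ℕ → Ω → C(α, F)} (hX : IsTightSeq P X)
    (hX_meas : ∀ n, AEMeasurable (X n) P) (hY : IsTightSeq P Y) :
    IsTightSeq P fun n ω ↦ (X n ω).prodMk (Y n ω) := by
  have hcont : Continuous fun p : C(α, E) × C(α, F) ↦ p.1.prodMk p.2 := by
    refine ContinuousMap.continuous_of_continuous_uncurry _ ?_
    change Continuous fun q : (C(α, E) × C(α, F)) × α ↦ (q.1.1 q.2, q.1.2 q.2)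
    fun_prop
  exact (hX.prodMk hX_meas hY).map hcont

theorem of_dist_le [IsProbabilityMeasure P] [WeaklyLocallyCompactSpace α]
    [MetricSpace E] [ProperSpace E] [MeasurableSpace E] [OpensMeasurableSpace E]
    [PseudoMetricSpace F] {X : ℕ → Ω → C(α, E)} {Y : ℕ → Ω → C(α, F)} (o : α)
    (hXo : IsTightSeq P fun n ω ↦ X n ω o)
    (hXo_meas : ∀ n, AEMeasurable (fun ω ↦ X n ω o) P) (hY : IsTightSeq P Y)
    (hXY : ∀ n, ∀ᵐ ω ∂P, ∀ s t, dist (X n ω s) (X n ω t) ≤ dist (Y n ω s) (Y n ω t)) :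
    IsTightSeq P X := by
  refine (hXo.prodMk hXo_meas hY).of_ae_mem_imp fun K hK ↦ ⟨_, isCompact_closure_setOf_dist_le o
    (hK.image continuous_fst) (hK.image continuous_snd), fun n ↦ ?_⟩
  filter_upwards [hXY n] with ω hω hmem
  exact subset_closure ⟨mem_image_of_mem Prod.fst hmem, Y n ω, mem_image_of_mem Prod.snd hmem, hω⟩

end IsTightSeq

end Tightness

lemma dist_le_dist_prodMk_of_sub_le {α : Type*} [LinearOrder α] {f g h : α → ℝ}
    (hfgh : ∀ s t, s ≤ t → h t - h s ≤ f t - f s ∧ f t - f s ≤ g t - g s) (s t : α) :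
    dist (f s) (f t) ≤ dist (g s, h s) (g t, h t) := by
  wlog hst : s ≤ t generalizing s t
  · simpa only [dist_comm] using this t s (le_of_not_ge hst)
  obtain ⟨hlower, hupper⟩ := hfgh s t hst
  rw [dist_comm, dist_comm (g s, h s), Prod.dist_eq, max_comm]
  simp only [Real.dist_eq]
  exact abs_le_max_abs_abs hlower hupper

theorem stmt_9_general {Ω α : Type*} [MeasurableSpace Ω] {P : Measure Ω} [IsProbabilityMeasure P]
    [TopologicalSpace α] [WeaklyLocallyCompactSpace α] [LinearOrder α]
    [MeasurableSpace C(α, ℝ)] [OpensMeasurableSpace C(α, ℝ)] {X X' X'' : ℕ → Ω → C(α, ℝ)} (o : α)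
    (hXo : IsTightSeq P fun n ω ↦ X n ω o) (hXo_meas : ∀ n, AEMeasurable (fun ω ↦ X n ω o) P)
    (hX'_meas : ∀ n, AEMeasurable (X' n) P)
    (hcomp : ∀ n, ∀ᵐ ω ∂P, ∀ s t, s ≤ t →
      X'' n ω t - X'' n ω s ≤ X n ω t - X n ω s ∧ X n ω t - X n ω s ≤ X' n ω t - X' n ω s)
    (hX' : IsTightSeq P X') (hX'' : IsTightSeq P X'') : IsTightSeq P X :=
  .of_dist_le o hXo hXo_meas (hX'.continuousMap_prodMk hX'_meas hX'') fun n ↦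
    (hcomp n).mono fun _ ↦ dist_le_dist_prodMk_of_sub_le

/-- If `X''ₙ(t) − X''ₙ(s) ≤ Xₙ(t) − Xₙ(s) ≤ X'ₙ(t) − X'ₙ(s)` for all
`s ≤ t`, all processes start at `0`, and `(X'ₙ)`, `(X''ₙ)` are tight in `C([0,T], ℝ)`,
then `(Xₙ)` is tight. -/
theorem stmt_9 {Ω : Type*} [MeasurableSpace Ω] (P : Measure Ω) [IsProbabilityMeasure P]
    (T : ℝ) (hT : 0 < T)
    [MeasurableSpace C(Icc (0:ℝ) T, ℝ)] [BorelSpace C(Icc (0:ℝ) T, ℝ)]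
    (X X' X'' : ℕ → Ω → C(Icc (0:ℝ) T, ℝ))
    (hmX : ∀ n, Measurable (X n)) (hmX' : ∀ n, Measurable (X' n))
    (hmX'' : ∀ n, Measurable (X'' n))
    (hzero : ∀ᵐ ω ∂P, ∀ n : ℕ,
      X n ω ⟨0, ⟨le_refl 0, hT.le⟩⟩ = 0 ∧ X' n ω ⟨0, ⟨le_refl 0, hT.le⟩⟩ = 0 ∧
      X'' n ω ⟨0, ⟨le_refl 0, hT.le⟩⟩ = 0)
    (hcomp : ∀ᵐ ω ∂P, ∀ n : ℕ, ∀ s t : Icc (0:ℝ) T, s ≤ t →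
      X'' n ω t - X'' n ω s ≤ X n ω t - X n ω s ∧
      X n ω t - X n ω s ≤ X' n ω t - X' n ω s)
    (htX' : IsTightSeq P X') (htX'' : IsTightSeq P X'') :
    IsTightSeq P X := by
  have hX₀ : ∀ n, ∀ᵐ ω ∂P, X n ω ⟨0, ⟨le_refl 0, hT.le⟩⟩ = 0 :=
    fun n ↦ hzero.mono fun _ hω ↦ (hω n).1
  exact stmt_9_general ⟨0, ⟨le_refl 0, hT.le⟩⟩ (isTightSeq_of_ae_mem isCompact_singleton hX₀)
    (fun n ↦ aemeasurable_const.congr (EventuallyEq.symm (hX₀ n)))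
    (fun n ↦ (hmX' n).aemeasurable) (ae_all_iff.1 hcomp) htX' htX''
end
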